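/- arXiv:2505.23445 — 2 statements merged into one kernel-verified Lean document; each statement's English description precedes it below -/
import Mathlib

section
/- Let (G, ξ) be a centered bivariate Gaussian vector with covariance matrix [[a, c], [c, b]], a, b > 0, |c| < √(ab), and M = G + ξ. Then as m → ∞, E[Gξ | M > m] = ((a+c)(b+c)/(a+b+2c)²)·m² + (a+c)(b+c)/(a+b+2c) + c - 2(a+c)(b+c)/m² + o(m⁻²). -/
open MeasureTheory ProbabilityTheory Filter Asymptotics Real

/-- Expectation of `X` conditioned on an event `s` (i.e. `E[X·1ₛ]/P(s)`). -/
noncomputable def condExpEvent {Ω : Type*} [MeasureSpace Ω] (X : Ω → ℝ) (s : Set Ω) : ℝ :=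
  (∫ ω in s, X ω) / (ℙ s).toReal

/-!
Regress `G` and `ξ` linearly on `M = G + ξ`. The residuals are jointly Gaussian and uncorrelated
with `M`, hence independent of it, so `E[Gξ | M > m] = pq E[M² | M > m] + const`, where `p` and `q`
are the regression coefficients. If `v` is the variance of `M`, integration by parts against the
Gaussian density expresses the tail moment `E[M ^ (n + 2); M > m]` through `E[M ^ n; M > m]`.
Started at `n = -2, -4, -6`, this recursion gives the Mills ratio up to a relative error of third
order in `v / m²`, and with `n = 0` it turns the Mills ratio into
`E[M² | M > m] = m² + 2 v - 2 v² / m² + O(m⁻⁴)`.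
-/

open scoped NNReal Topology

section GaussianTail

variable {v : ℝ≥0} {m : ℝ}

lemma hasDerivAt_gaussianPDFReal (μ : ℝ) (v : ℝ≥0) (x : ℝ) :
    HasDerivAt (gaussianPDFReal μ v) (-((x - μ) / v) * gaussianPDFReal μ v x) x := by
  have hexponent : HasDerivAt (fun y : ℝ ↦ -(y - μ) ^ 2 / (2 * (v : ℝ))) (-((x - μ) / v)) x := by
    refine ((((hasDerivAt_id x).sub_const μ).pow 2).neg.div_const (2 * (v : ℝ))).congr_deriv ?_
    simp only [id_eq]
    ring
  rw [gaussianPDFReal_def]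
  exact (hexponent.exp.const_mul _).congr_deriv (by ring)

lemma zpow_mul_gaussianPDFReal_isLittleO_exp_neg (hv : v ≠ 0) (n : ℤ) :
    (fun x ↦ x ^ n * gaussianPDFReal 0 v x) =o[atTop] fun x ↦ exp (-(1 / 2) * x) := by
  have hb : (0 : ℝ) < 1 / (2 * v) := by positivity
  refine ((rpow_mul_exp_neg_mul_sq_isLittleO_exp_neg hb n).const_mul_left
    (√(2 * π * v))⁻¹).congr_left fun x ↦ ?_
  rw [gaussianPDFReal, rpow_intCast,
    show -(x - 0) ^ 2 / (2 * (v : ℝ)) = -(1 / (2 * v)) * x ^ 2 by ring]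
  ring

lemma tendsto_zpow_mul_gaussianPDFReal_atTop (hv : v ≠ 0) (n : ℤ) :
    Tendsto (fun x ↦ x ^ n * gaussianPDFReal 0 v x) atTop (𝓝 0) :=
  (zpow_mul_gaussianPDFReal_isLittleO_exp_neg hv n).isBigO.trans_tendsto <|
    tendsto_exp_atBot.comp <| tendsto_id.const_mul_atTop_of_neg (by norm_num)

lemma integrableOn_Ioi_zpow_mul_gaussianPDFReal (hv : v ≠ 0) (hm : 0 < m) (n : ℤ) :
    IntegrableOn (fun x ↦ x ^ n * gaussianPDFReal 0 v x) (Set.Ioi m) := by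
  refine integrable_of_isBigO_exp_neg one_half_pos (fun x hx ↦ ?_)
    (zpow_mul_gaussianPDFReal_isLittleO_exp_neg hv n).isBigO
  have hx0 : x ≠ 0 := (hm.trans_le hx).ne'
  exact ((continuousAt_zpow₀ x n (Or.inl hx0)).mul
    (hasDerivAt_gaussianPDFReal 0 v x).continuousAt).continuousWithinAt

/-- The tail moment `E[X ^ n; X > m]` of a centered Gaussian `X` of variance `v ≠ 0`. The exponent
is an integer, so that the inverse moments occurring in the Mills ratio are included. -/
noncomputable def gaussianTailMoment (v : ℝ≥0) (n : ℤ) (m : ℝ) : ℝ :=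
  ∫ x in Set.Ioi m, x ^ n * gaussianPDFReal 0 v x

lemma gaussianTailMoment_pos (hv : v ≠ 0) (hm : 0 < m) (n : ℤ) :
    0 < gaussianTailMoment v n m := by
  have hpos : ∀ x ∈ Set.Ioi m, 0 < x ^ n * gaussianPDFReal 0 v x := fun x hx ↦
    mul_pos (zpow_pos (hm.trans hx) n) (gaussianPDFReal_pos 0 v x hv)
  have hsupport : Set.Ioi m ⊆ Function.support fun x ↦ x ^ n * gaussianPDFReal 0 v x :=
    fun x hx ↦ (hpos x hx).ne'
  rw [gaussianTailMoment, setIntegral_pos_iff_support_of_nonneg_ae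
    ((ae_restrict_mem measurableSet_Ioi).mono fun x hx ↦ (hpos x hx).le)
    (integrableOn_Ioi_zpow_mul_gaussianPDFReal hv hm n),
    Set.inter_eq_right.mpr hsupport, Real.volume_Ioi]
  exact ENNReal.zero_lt_top

-- Integration by parts: the density `f` satisfies `x f(x) dx = -v df(x)`.
lemma gaussianTailMoment_add_two (hv : v ≠ 0) (hm : 0 < m) (n : ℤ) :
    gaussianTailMoment v (n + 2) m = v * m ^ (n + 1) * gaussianPDFReal 0 v m +
      (n + 1) * v * gaussianTailMoment v n m := by
  have hv' : (v : ℝ) ≠ 0 := by exact_mod_cast hv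
  have hint := integrableOn_Ioi_zpow_mul_gaussianPDFReal hv hm
  have hderiv : ∀ x ∈ Set.Ici m, HasDerivAt (fun y ↦ -v * (y ^ (n + 1) * gaussianPDFReal 0 v y))
      (x ^ (n + 2) * gaussianPDFReal 0 v x -
        (n + 1) * v * (x ^ n * gaussianPDFReal 0 v x)) x := fun x hx ↦ by
    have hx0 : x ≠ 0 := (hm.trans_le hx).ne'
    refine (((hasDerivAt_zpow (n + 1) x (Or.inl hx0)).mul
      (hasDerivAt_gaussianPDFReal 0 v x)).const_mul (-(v : ℝ))).congr_deriv ?_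
    rw [add_sub_cancel_right, zpow_add₀ hx0, zpow_add₀ hx0, zpow_one, zpow_ofNat]
    push_cast
    field_simp
    ring
  have hftc := integral_Ioi_of_hasDerivAt_of_tendsto' hderiv
    ((hint (n + 2)).sub ((hint n).const_mul _))
    ((tendsto_zpow_mul_gaussianPDFReal_atTop hv (n + 1)).const_mul _)
  rw [integral_sub (hint (n + 2)) ((hint n).const_mul _), integral_const_mul] at hftc
  rw [gaussianTailMoment, gaussianTailMoment]
  linarith

lemma gaussianTailMoment_le_of_le_one (hv : v ≠ 0) (hm : 0 < m) {n : ℤ} (hn : n ≤ 1) :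
    gaussianTailMoment v n m ≤ v * m ^ (n - 1) * gaussianPDFReal 0 v m := by
  have hrec := gaussianTailMoment_add_two hv hm (n - 2)
  have hn' : (n : ℝ) ≤ 1 := by exact_mod_cast hn
  have hlower : 0 ≤ (1 - n : ℝ) * (v * gaussianTailMoment v (n - 2) m) :=
    mul_nonneg (by linarith) (mul_nonneg v.2 (gaussianTailMoment_pos hv hm _).le)
  rw [sub_add_cancel, show n - 2 + 1 = n - 1 by ring] at hrec
  push_cast at hrec
  linarith

lemma gaussianTailMoment_zero_eq (hv : v ≠ 0) (hm : 0 < m) :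
    gaussianTailMoment v 0 m = v / m * gaussianPDFReal 0 v m *
      (1 - v / m ^ 2 + 3 * (v / m ^ 2) ^ 2) - 15 * v ^ 3 * gaussianTailMoment v (-6) m := by
  have hrec₀ : gaussianTailMoment v 0 m =
      v * (m ^ 1)⁻¹ * gaussianPDFReal 0 v m + -1 * v * gaussianTailMoment v (-2) m := by
    convert gaussianTailMoment_add_two hv hm (-2) using 3 <;> norm_num
  have hrec₂ : gaussianTailMoment v (-2) m =
      v * (m ^ 3)⁻¹ * gaussianPDFReal 0 v m + -3 * v * gaussianTailMoment v (-4) m := by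
    convert gaussianTailMoment_add_two hv hm (-4) using 3 <;> norm_num
  have hrec₄ : gaussianTailMoment v (-4) m =
      v * (m ^ 5)⁻¹ * gaussianPDFReal 0 v m + -5 * v * gaussianTailMoment v (-6) m := by
    convert gaussianTailMoment_add_two hv hm (-6) using 3 <;> norm_num
  rw [hrec₀, hrec₂, hrec₄]
  field_simp
  ring

lemma abs_gaussianTailMoment_zero_div_sub_le (hv : v ≠ 0) (hm : 0 < m) :
    |gaussianTailMoment v 0 m / (v / m * gaussianPDFReal 0 v m) -
      (1 - v / m ^ 2 + 3 * (v / m ^ 2) ^ 2)| ≤ 15 * (v / m ^ 2) ^ 3 := by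
  have hpdf := gaussianPDFReal_pos 0 v m hv
  have hlead : 0 < v / m * gaussianPDFReal 0 v m := by positivity
  have hrem := gaussianTailMoment_pos hv hm (-6)
  have hdiff : gaussianTailMoment v 0 m / (v / m * gaussianPDFReal 0 v m) -
      (1 - v / m ^ 2 + 3 * (v / m ^ 2) ^ 2) =
      -(15 * v ^ 3 * gaussianTailMoment v (-6) m / (v / m * gaussianPDFReal 0 v m)) := by
    rw [gaussianTailMoment_zero_eq hv hm, sub_div, mul_div_cancel_left₀ _ hlead.ne']
    ring
  rw [hdiff, abs_neg, abs_of_pos (by positivity), div_le_iff₀ hlead]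
  calc 15 * (v : ℝ) ^ 3 * gaussianTailMoment v (-6) m
      ≤ 15 * v ^ 3 * (v * m ^ (-7 : ℤ) * gaussianPDFReal 0 v m) := by
        gcongr
        exact gaussianTailMoment_le_of_le_one hv hm (by norm_num)
    _ = 15 * (v / m ^ 2) ^ 3 * (v / m * gaussianPDFReal 0 v m) := by
        rw [zpow_neg, zpow_ofNat]
        field_simp

end GaussianTail

-- `(1 - t + 3 t²)(1 + t - 2 t²) = 1 + O(t³)`.
lemma inv_sub_isBigO_pow_three {α : Type*} {l : Filter α} {t h : α → ℝ} (ht : Tendsto t l (𝓝 0))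
    (hh : (fun x ↦ h x - (1 - t x + 3 * t x ^ 2)) =O[l] fun x ↦ t x ^ 3) :
    (fun x ↦ (h x)⁻¹ - (1 + t x - 2 * t x ^ 2)) =O[l] fun x ↦ t x ^ 3 := by
  have htpow : Tendsto (fun x ↦ t x ^ 3) l (𝓝 0) := by simpa using ht.pow 3
  have hh_lim : Tendsto h l (𝓝 1) := by
    have := (hh.trans_tendsto htpow).add
      ((tendsto_const_nhds (x := (1 : ℝ))).sub ht |>.add ((ht.pow 2).const_mul 3))
    simpa using this
  have hinv_lim := hh_lim.inv₀ one_ne_zero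
  have hprod : (fun x ↦ (5 - 6 * t x) * t x ^ 3 +
      (1 + t x - 2 * t x ^ 2) * (h x - (1 - t x + 3 * t x ^ 2))) =O[l] fun x ↦ t x ^ 3 := by
    have hcoeff₁ : (fun x ↦ 5 - 6 * t x) =O[l] fun _ ↦ (1 : ℝ) :=
      (tendsto_const_nhds.sub (ht.const_mul 6)).isBigO_one ℝ
    have hcoeff₂ : (fun x ↦ 1 + t x - 2 * t x ^ 2) =O[l] fun _ ↦ (1 : ℝ) :=
      ((tendsto_const_nhds.add ht).sub ((ht.pow 2).const_mul 2)).isBigO_one ℝ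
    simpa using (hcoeff₁.mul (isBigO_refl (fun x ↦ t x ^ 3) l)).add (hcoeff₂.mul hh)
  refine ((hinv_lim.isBigO_one ℝ).mul hprod).neg_left.congr' ?_ (by simp)
  filter_upwards [hh_lim.eventually_ne one_ne_zero] with x hx
  field_simp
  ring

lemma gaussianTailMoment_two_div_zero_isBigO {v : ℝ≥0} (hv : v ≠ 0) :
    (fun m ↦ gaussianTailMoment v 2 m / gaussianTailMoment v 0 m -
      (m ^ 2 + 2 * v - 2 * v ^ 2 / m ^ 2)) =O[atTop] fun m : ℝ ↦ m ^ (-(4 : ℤ)) := by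
  have hv' : (v : ℝ) ≠ 0 := by exact_mod_cast hv
  have ht : Tendsto (fun m : ℝ ↦ v / m ^ 2) atTop (𝓝 0) :=
    tendsto_const_nhds.div_atTop (tendsto_pow_atTop two_ne_zero)
  have hmills : (fun m ↦ gaussianTailMoment v 0 m / (v / m * gaussianPDFReal 0 v m) -
      (1 - v / m ^ 2 + 3 * (v / m ^ 2) ^ 2)) =O[atTop] fun m ↦ (v / m ^ 2) ^ 3 := by
    refine IsBigO.of_bound 15 ?_
    filter_upwards [eventually_gt_atTop 0] with m hm
    rw [Real.norm_eq_abs, Real.norm_of_nonneg (by positivity)]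
    exact abs_gaussianTailMoment_zero_div_sub_le hv hm
  have hscaled := (isBigO_refl (fun m : ℝ ↦ m ^ 2) atTop).mul (inv_sub_isBigO_pow_three ht hmills)
  have hrem : (fun m : ℝ ↦ m ^ 2 * (v / m ^ 2) ^ 3) =ᶠ[atTop]
      fun m ↦ (v : ℝ) ^ 3 * m ^ (-(4 : ℤ)) := by
    filter_upwards [eventually_gt_atTop 0] with m hm
    rw [zpow_neg, zpow_ofNat]
    field_simp
  refine ((hscaled.trans_eventuallyEq hrem).trans (isBigO_const_mul_self _ _ _)).congr' ?_ .rfl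
  filter_upwards [eventually_gt_atTop 0] with m hm
  have hsecond : gaussianTailMoment v 2 m =
      v * m * gaussianPDFReal 0 v m + v * gaussianTailMoment v 0 m := by
    simpa using gaussianTailMoment_add_two hv hm 0
  have htail := (gaussianTailMoment_pos hv hm 0).ne'
  rw [hsecond]
  field_simp
  ring

section Conditioning

variable {Ω : Type*} [MeasurableSpace Ω] {P : Measure Ω}

lemma setIntegral_preimage_comp_mul_comp_of_indepFun {𝓧 𝓨 : Type*} [MeasurableSpace 𝓧]
    [MeasurableSpace 𝓨] {X : Ω → 𝓧} {Y : Ω → 𝓨} (hXY : X ⟂ᵢ[P] Y) (hX : AEMeasurable X P)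
    (hY : AEMeasurable Y P) {s : Set 𝓧} (hs : MeasurableSet s) {f : 𝓧 → ℝ} {g : 𝓨 → ℝ}
    (hf : AEStronglyMeasurable f (P.map X)) (hg : AEStronglyMeasurable g (P.map Y)) :
    ∫ ω in X ⁻¹' s, f (X ω) * g (Y ω) ∂P =
      (∫ ω in X ⁻¹' s, f (X ω) ∂P) * ∫ ω, g (Y ω) ∂P := by
  have hindicator := hXY.integral_fun_comp_mul_comp hX hY (hf.indicator hs) hg
  have hpre : NullMeasurableSet (X ⁻¹' s) P := hX.nullMeasurableSet_preimage hs
  have hfg : (X ⁻¹' s).indicator (fun ω ↦ f (X ω) * g (Y ω)) =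
      fun ω ↦ s.indicator f (X ω) * g (Y ω) := by
    ext ω
    exact Set.indicator_mul_left _ _ _
  rw [← integral_indicator₀ hpre, ← integral_indicator₀ hpre, hfg]
  exact hindicator

lemma setIntegral_preimage_zpow_eq_gaussianTailMoment {X : Ω → ℝ} {v : ℝ≥0} (hv : v ≠ 0)
    (hX : HasLaw X (gaussianReal 0 v) P) (n : ℤ) (m : ℝ) :
    ∫ ω in X ⁻¹' Set.Ioi m, X ω ^ n ∂P = gaussianTailMoment v n m := by
  rw [← setIntegral_map (f := fun x ↦ x ^ n) measurableSet_Ioi (by fun_prop) hX.aemeasurable,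
    hX.map_eq, gaussianReal_of_var_ne_zero 0 hv,
    setIntegral_withDensity_eq_setIntegral_toReal_smul (measurable_gaussianPDF 0 v)
      (ae_of_all _ fun _ ↦ gaussianPDF_lt_top) _ measurableSet_Ioi, gaussianTailMoment]
  simp only [toReal_gaussianPDF, smul_eq_mul, mul_comm]

lemma measureReal_preimage_Ioi_eq_gaussianTailMoment {X : Ω → ℝ} {v : ℝ≥0} (hv : v ≠ 0)
    (hX : HasLaw X (gaussianReal 0 v) P) (m : ℝ) :
    P.real (X ⁻¹' Set.Ioi m) = gaussianTailMoment v 0 m := by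
  simp [← setIntegral_preimage_zpow_eq_gaussianTailMoment hv hX]

lemma indepFun_sub_smul_of_hasGaussianLaw {E : Type*} [NormedAddCommGroup E] [NormedSpace ℝ E]
    [CompleteSpace E] [SecondCountableTopology E] [MeasurableSpace E] [BorelSpace E]
    {M : Ω → ℝ} {Y : Ω → E} (hMY : HasGaussianLaw (fun ω ↦ (M ω, Y ω)) P) {w : E}
    (hw : ∀ L : StrongDual ℝ E, cov[M, fun ω ↦ L (Y ω); P] = L w * Var[M; P]) :
    M ⟂ᵢ[P] fun ω ↦ Y ω - M ω • w := by
  have := hMY.isProbabilityMeasure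
  have hM := hMY.fst.memLp_two
  let residual : ℝ × E →L[ℝ] ℝ × E :=
    (ContinuousLinearMap.fst ℝ ℝ E).prod (ContinuousLinearMap.snd ℝ ℝ E -
      (ContinuousLinearMap.fst ℝ ℝ E).smulRight w)
  refine HasGaussianLaw.indepFun_of_covariance_strongDual (hMY.map residual) fun L₁ L₂ ↦ ?_
  have hL₁ : L₁ ∘ M = fun ω ↦ L₁ 1 * M ω := by
    ext ω
    simpa [mul_comm] using L₁.map_smul (M ω) 1
  have hL₂ : (L₂ ∘ fun ω ↦ Y ω - M ω • w) = fun ω ↦ L₂ (Y ω) - M ω * L₂ w := by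
    ext ω
    simp
  have hLY : MemLp (fun ω ↦ L₂ (Y ω)) 2 P := (hMY.snd.map_fun L₂).memLp_two
  rw [hL₁, hL₂, covariance_const_mul_left, covariance_fun_sub_right hM hLY (hM.mul_const _),
    covariance_mul_const_right, covariance_self hM.aemeasurable, hw]
  ring

lemma strongDual_prod_real_apply (L : StrongDual ℝ (ℝ × ℝ)) (x y : ℝ) :
    L (x, y) = x * L (1, 0) + y * L (0, 1) := by
  rw [← smul_eq_mul, ← smul_eq_mul, ← map_smul, ← map_smul, ← map_add]
  simp

variable {M U V : Ω → ℝ}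

lemma indepFun_prodMk_sub_mul_of_hasGaussianLaw
    (h : HasGaussianLaw (fun ω ↦ (M ω, U ω, V ω)) P) (hvar : Var[M; P] ≠ 0) :
    M ⟂ᵢ[P] fun ω ↦ (U ω - cov[U, M; P] / Var[M; P] * M ω,
      V ω - cov[V, M; P] / Var[M; P] * M ω) := by
  have := h.isProbabilityMeasure
  have hU := h.snd.fst.memLp_two
  have hV := h.snd.snd.memLp_two
  have hregression (L : StrongDual ℝ (ℝ × ℝ)) : cov[M, fun ω ↦ L (U ω, V ω); P] =
      L (cov[U, M; P] / Var[M; P], cov[V, M; P] / Var[M; P]) * Var[M; P] := by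
    have hLUV : (fun ω ↦ L (U ω, V ω)) =
        (fun ω ↦ U ω * L (1, 0)) + fun ω ↦ V ω * L (0, 1) :=
      funext fun ω ↦ strongDual_prod_real_apply L _ _
    rw [hLUV, strongDual_prod_real_apply L (_ / _),
      covariance_add_right h.fst.memLp_two (hU.mul_const _) (hV.mul_const _),
      covariance_mul_const_right, covariance_mul_const_right, covariance_comm M U,
      covariance_comm M V]
    field_simp
  convert indepFun_sub_smul_of_hasGaussianLaw h hregression using 2 with ω
  simp [mul_comm]

lemma integral_sub_const_mul_eq_zero (hU : Integrable U P) (hM : Integrable M P) (hU₀ : P[U] = 0)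
    (hM₀ : P[M] = 0) (r : ℝ) : ∫ ω, (U ω - r * M ω) ∂P = 0 := by
  rw [integral_sub hU (hM.const_mul r), integral_const_mul, hU₀, hM₀, mul_zero, sub_zero]

lemma covariance_regression_residuals [IsFiniteMeasure P] (hU : MemLp U 2 P) (hV : MemLp V 2 P)
    (hM : MemLp M 2 P) (hvar : Var[M; P] ≠ 0) :
    cov[fun ω ↦ U ω - cov[U, M; P] / Var[M; P] * M ω,
      fun ω ↦ V ω - cov[V, M; P] / Var[M; P] * M ω; P] =
      cov[U, V; P] - cov[U, M; P] * cov[V, M; P] / Var[M; P] := by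
  rw [covariance_fun_sub_fun_sub hU (hM.const_mul _) hV (hM.const_mul _),
    covariance_const_mul_left, covariance_const_mul_left, covariance_const_mul_right,
    covariance_const_mul_right, covariance_self hM.aemeasurable, covariance_comm M V]
  field_simp
  ring

lemma setIntegral_preimage_mul_add_mul_mul_add_of_indepFun [IsFiniteMeasure P]
    (hM : MemLp M 2 P) (hU : MemLp U 2 P) (hV : MemLp V 2 P)
    (hindep : M ⟂ᵢ[P] fun ω ↦ (U ω, V ω)) (hU₀ : P[U] = 0) (hV₀ : P[V] = 0) (p q : ℝ)
    {s : Set ℝ} (hs : MeasurableSet s) :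
    ∫ ω in M ⁻¹' s, (p * M ω + U ω) * (q * M ω + V ω) ∂P =
      p * q * ∫ ω in M ⁻¹' s, M ω ^ 2 ∂P + P.real (M ⁻¹' s) * ∫ ω, U ω * V ω ∂P := by
  have hUV : AEMeasurable (fun ω ↦ (U ω, V ω)) P := hU.aemeasurable.prodMk hV.aemeasurable
  have hlinear : ∫ ω in M ⁻¹' s, M ω * (p * V ω + q * U ω) ∂P = 0 := by
    rw [setIntegral_preimage_comp_mul_comp_of_indepFun (f := fun x ↦ x)
      (g := fun z : ℝ × ℝ ↦ p * z.2 + q * z.1) hindep hM.aemeasurable hUV hs (by fun_prop)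
      (by fun_prop), integral_add ((hV.integrable one_le_two).const_mul p)
      ((hU.integrable one_le_two).const_mul q), integral_const_mul, integral_const_mul, hU₀, hV₀]
    simp
  have hresidual : ∫ ω in M ⁻¹' s, U ω * V ω ∂P =
      P.real (M ⁻¹' s) * ∫ ω, U ω * V ω ∂P := by
    simpa using setIntegral_preimage_comp_mul_comp_of_indepFun (f := fun _ ↦ 1)
      (g := fun z : ℝ × ℝ ↦ z.1 * z.2) hindep hM.aemeasurable hUV hs (by fun_prop) (by fun_prop)
  have hexpand (ω : Ω) : (p * M ω + U ω) * (q * M ω + V ω) =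
      p * q * M ω ^ 2 + M ω * (p * V ω + q * U ω) + U ω * V ω := by ring
  have hsq : Integrable (fun ω ↦ p * q * M ω ^ 2) P := hM.integrable_sq.const_mul _
  have hcross : Integrable (fun ω ↦ M ω * (p * V ω + q * U ω)) P :=
    hM.integrable_mul ((hV.const_mul p).add (hU.const_mul q))
  have hsum : Integrable (fun ω ↦ p * q * M ω ^ 2 + M ω * (p * V ω + q * U ω)) P :=
    hsq.add hcross
  have hprod : Integrable (fun ω ↦ U ω * V ω) P := hU.integrable_mul hV
  simp_rw [hexpand]
  rw [integral_add hsum.integrableOn hprod.integrableOn,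
    integral_add hsq.integrableOn hcross.integrableOn, integral_const_mul, hlinear, hresidual,
    add_zero]

lemma setIntegral_preimage_mul_of_hasGaussianLaw
    (h : HasGaussianLaw (fun ω ↦ (M ω, U ω, V ω)) P) (hM₀ : P[M] = 0) (hU₀ : P[U] = 0)
    (hV₀ : P[V] = 0) (hvar : Var[M; P] ≠ 0) {s : Set ℝ} (hs : MeasurableSet s) :
    ∫ ω in M ⁻¹' s, U ω * V ω ∂P =
      cov[U, M; P] / Var[M; P] * (cov[V, M; P] / Var[M; P]) * ∫ ω in M ⁻¹' s, M ω ^ 2 ∂P +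
      P.real (M ⁻¹' s) * (cov[U, V; P] - cov[U, M; P] * cov[V, M; P] / Var[M; P]) := by
  have := h.isProbabilityMeasure
  have hM := h.fst.memLp_two
  have hU := h.snd.fst.memLp_two
  have hV := h.snd.snd.memLp_two
  let p := cov[U, M; P] / Var[M; P]
  let q := cov[V, M; P] / Var[M; P]
  have hresU : MemLp (fun ω ↦ U ω - p * M ω) 2 P := hU.sub (hM.const_mul p)
  have hresV : MemLp (fun ω ↦ V ω - q * M ω) 2 P := hV.sub (hM.const_mul q)
  have hresU₀ : ∫ ω, (U ω - p * M ω) ∂P = 0 := integral_sub_const_mul_eq_zero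
    (hU.integrable one_le_two) (hM.integrable one_le_two) hU₀ hM₀ p
  have hresV₀ : ∫ ω, (V ω - q * M ω) ∂P = 0 := integral_sub_const_mul_eq_zero
    (hV.integrable one_le_two) (hM.integrable one_le_two) hV₀ hM₀ q
  have hprod : ∫ ω, (U ω - p * M ω) * (V ω - q * M ω) ∂P =
      cov[U, V; P] - cov[U, M; P] * cov[V, M; P] / Var[M; P] := by
    rw [← covariance_regression_residuals hU hV hM hvar, covariance_eq_sub hresU hresV, hresU₀,
      zero_mul, sub_zero]
    rfl
  have hsplit := setIntegral_preimage_mul_add_mul_mul_add_of_indepFun hM hresU hresV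
    (indepFun_prodMk_sub_mul_of_hasGaussianLaw h hvar) hresU₀ hresV₀ p q hs
  simpa only [add_sub_cancel, hprod] using hsplit

end Conditioning

section LinearCombinations

variable {Ω : Type*} [MeasurableSpace Ω] {P : Measure Ω} {X Y : Ω → ℝ}

lemma hasGaussianLaw_prodMk_of_forall_linearCombination (hX : AEMeasurable X P)
    (hY : AEMeasurable Y P) (h : ∀ u v : ℝ, ∃ (m : ℝ) (w : ℝ≥0),
      P.map (fun ω ↦ u * X ω + v * Y ω) = gaussianReal m w) :
    HasGaussianLaw (fun ω ↦ (X ω, Y ω)) P := by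
  refine ⟨isGaussian_of_map_eq_gaussianReal fun L ↦ ?_⟩
  have hL : (L ∘ fun ω ↦ (X ω, Y ω)) = fun ω ↦ L (1, 0) * X ω + L (0, 1) * Y ω :=
    funext fun ω ↦ by
      rw [Function.comp_apply, strongDual_prod_real_apply, mul_comm (X ω), mul_comm (Y ω)]
  rw [AEMeasurable.map_map_of_aemeasurable (by fun_prop) (hX.prodMk hY), hL]
  exact h _ _

lemma hasGaussianLaw_add_prodMk_of_prodMk (h : HasGaussianLaw (fun ω ↦ (X ω, Y ω)) P) :
    HasGaussianLaw (fun ω ↦ ((X + Y) ω, X ω, Y ω)) P :=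
  h.map ((ContinuousLinearMap.fst ℝ ℝ ℝ + ContinuousLinearMap.snd ℝ ℝ ℝ).prod
    (ContinuousLinearMap.id ℝ (ℝ × ℝ)))

lemma integral_eq_of_hasLaw_gaussianReal {μ : ℝ} {v : ℝ≥0} (hX : HasLaw X (gaussianReal μ v) P) :
    P[X] = μ :=
  hX.integral_eq.trans integral_id_gaussianReal

lemma variance_eq_of_hasLaw_gaussianReal {μ v : ℝ} (hv : 0 ≤ v)
    (hX : HasLaw X (gaussianReal μ v.toNNReal) P) : Var[X; P] = v := by
  rw [hX.variance_eq, variance_id_gaussianReal, coe_toNNReal v hv]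

lemma covariance_self_add_right [IsFiniteMeasure P] (hX : MemLp X 2 P) (hY : MemLp Y 2 P) :
    cov[X, X + Y; P] = Var[X; P] + cov[X, Y; P] := by
  rw [covariance_add_right hX hX hY, covariance_self hX.aemeasurable]

end LinearCombinations

lemma add_add_two_mul_pos_of_abs_lt_sqrt {a b c : ℝ} (ha : 0 ≤ a) (hb : 0 ≤ b)
    (hc : |c| < √(a * b)) : 0 < a + b + 2 * c := by
  have hamgm : 2 * √(a * b) ≤ a + b := by
    rw [sqrt_mul ha]
    nlinarith [sq_nonneg (√a - √b), sq_sqrt ha, sq_sqrt hb]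
  linarith [neg_abs_le c]

lemma zpow_isLittleO_zpow_atTop {p q : ℤ} (hpq : p < q) :
    (fun x : ℝ ↦ x ^ p) =o[atTop] fun x ↦ x ^ q := by
  have hne : ∀ᶠ x : ℝ in atTop, x ≠ 0 := eventually_ne_atTop 0
  refine (isLittleO_iff_tendsto' (hne.mono fun x hx hq ↦ (zpow_ne_zero q hx hq).elim)).mpr ?_
  refine (tendsto_zpow_atTop_zero (sub_neg.mpr hpq)).congr' (hne.mono fun x hx ↦ ?_)
  exact zpow_sub₀ hx p q

section MixedExpansion

variable {Ω : Type*} [MeasureSpace Ω] {G ξ M : Ω → ℝ}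

lemma condExpEvent_mul_eq_gaussianTailMoment
    (h : HasGaussianLaw (fun ω ↦ (M ω, G ω, ξ ω)) ℙ) (hM : 𝔼[M] = 0) (hG : 𝔼[G] = 0)
    (hξ : 𝔼[ξ] = 0) (hvar : Var[M] ≠ 0) {m : ℝ} (hm : 0 < m) :
    condExpEvent (fun ω ↦ G ω * ξ ω) {ω | m < M ω} =
      cov[G, M] * cov[ξ, M] / Var[M] ^ 2 *
        (gaussianTailMoment Var[M].toNNReal 2 m / gaussianTailMoment Var[M].toNNReal 0 m) +
      (cov[G, ξ] - cov[G, M] * cov[ξ, M] / Var[M]) := by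
  have hv : Var[M].toNNReal ≠ 0 := by simpa using (variance_nonneg M ℙ).lt_of_ne' hvar
  have hlaw : HasLaw M (gaussianReal 0 Var[M].toNNReal) ℙ :=
    ⟨h.fst.aemeasurable, by rw [h.fst.map_eq_gaussianReal, hM]⟩
  have hsq : ∫ ω in M ⁻¹' Set.Ioi m, M ω ^ 2 = gaussianTailMoment Var[M].toNNReal 2 m :=
    setIntegral_preimage_zpow_eq_gaussianTailMoment hv hlaw 2 m
  have htail := (gaussianTailMoment_pos hv hm 0).ne'
  rw [condExpEvent, ← measureReal_def,
    show {ω | m < M ω} = M ⁻¹' Set.Ioi m from rfl,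
    setIntegral_preimage_mul_of_hasGaussianLaw h hM hG hξ hvar measurableSet_Ioi, hsq,
    measureReal_preimage_Ioi_eq_gaussianTailMoment hv hlaw]
  field_simp

theorem gaussian_condExp_mixed_expansion_general
    (h : HasGaussianLaw (fun ω ↦ (M ω, G ω, ξ ω)) ℙ) (hM : 𝔼[M] = 0) (hG : 𝔼[G] = 0)
    (hξ : 𝔼[ξ] = 0) (hvar : Var[M] ≠ 0) :
    (fun m : ℝ ↦ condExpEvent (fun ω ↦ G ω * ξ ω) {ω | m < M ω} -
        (cov[G, M] * cov[ξ, M] / Var[M] ^ 2 * m ^ 2 + cov[G, M] * cov[ξ, M] / Var[M] + cov[G, ξ]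
          - 2 * cov[G, M] * cov[ξ, M] / m ^ 2))
      =O[atTop] fun m : ℝ ↦ m ^ (-(4 : ℤ)) := by
  have hv : Var[M].toNNReal ≠ 0 := by simpa using (variance_nonneg M ℙ).lt_of_ne' hvar
  refine ((gaussianTailMoment_two_div_zero_isBigO hv).const_mul_left
    (cov[G, M] * cov[ξ, M] / Var[M] ^ 2)).congr' ?_ .rfl
  filter_upwards [eventually_gt_atTop 0] with m hm
  rw [condExpEvent_mul_eq_gaussianTailMoment h hM hG hξ hvar hm,
    coe_toNNReal _ (variance_nonneg M ℙ)]
  field_simp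
  ring

lemma condExpEvent_mul_add_isBigO (h : HasGaussianLaw (fun ω ↦ (G ω, ξ ω)) ℙ) (hG : 𝔼[G] = 0)
    (hξ : 𝔼[ξ] = 0) (hvar : Var[G] + Var[ξ] + 2 * cov[G, ξ] ≠ 0) :
    (fun m : ℝ ↦ condExpEvent (fun ω ↦ G ω * ξ ω) {ω | m < G ω + ξ ω} -
        ((Var[G] + cov[G, ξ]) * (Var[ξ] + cov[G, ξ]) / (Var[G] + Var[ξ] + 2 * cov[G, ξ]) ^ 2 * m ^ 2
          + (Var[G] + cov[G, ξ]) * (Var[ξ] + cov[G, ξ]) / (Var[G] + Var[ξ] + 2 * cov[G, ξ])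
          + cov[G, ξ] - 2 * (Var[G] + cov[G, ξ]) * (Var[ξ] + cov[G, ξ]) / m ^ 2))
      =O[atTop] fun m : ℝ ↦ m ^ (-(4 : ℤ)) := by
  have := h.isProbabilityMeasure
  have hG₂ := h.fst.memLp_two
  have hξ₂ := h.snd.memLp_two
  have hmean : 𝔼[G + ξ] = 0 := by
    rw [integral_add' h.fst.integrable h.snd.integrable, hG, hξ, add_zero]
  have hvarM : Var[G + ξ] = Var[G] + Var[ξ] + 2 * cov[G, ξ] := by
    rw [variance_add hG₂ hξ₂]
    ring
  have hcovG : cov[G, G + ξ] = Var[G] + cov[G, ξ] := covariance_self_add_right hG₂ hξ₂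
  have hcovξ : cov[ξ, G + ξ] = Var[ξ] + cov[G, ξ] := by
    rw [add_comm G, covariance_self_add_right hξ₂ hG₂, covariance_comm]
  rw [← hvarM] at hvar ⊢
  rw [← hcovG, ← hcovξ]
  exact gaussian_condExp_mixed_expansion_general (hasGaussianLaw_add_prodMk_of_prodMk h)
    hmean hG hξ hvar

end MixedExpansion

/-- Mixed conditional moment expansion:
`E[Gξ | M > m] = ((a+c)(b+c)/(a+b+2c)²) m² + (a+c)(b+c)/(a+b+2c) + c - 2(a+c)(b+c)/m² + o(m⁻²)`. -/
theorem gaussian_condExp_mixed_expansion {Ω : Type*} [MeasureSpace Ω] [IsProbabilityMeasure (ℙ : Measure Ω)]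
    (G ξ : Ω → ℝ) (hG : Measurable G) (hξ : Measurable ξ)
    (a b c : ℝ) (ha : 0 < a) (hb : 0 < b) (hc : |c| < Real.sqrt (a * b))
    (hlaw : ∀ u v : ℝ, Measure.map (fun ω => u * G ω + v * ξ ω) ℙ =
      gaussianReal 0 (Real.toNNReal (u ^ 2 * a + 2 * u * v * c + v ^ 2 * b))) :
    (fun m : ℝ => condExpEvent (fun ω => G ω * ξ ω) {ω | m < G ω + ξ ω} -
        ((a + c) * (b + c) / (a + b + 2 * c) ^ 2 * m ^ 2
          + (a + c) * (b + c) / (a + b + 2 * c) + c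
          - 2 * (a + c) * (b + c) / m ^ 2))
      =o[atTop] (fun m : ℝ => m ^ (-(2 : ℤ))) := by
  have hvarM : 0 < a + b + 2 * c := add_add_two_mul_pos_of_abs_lt_sqrt ha.le hb.le hc
  have hlawG : HasLaw G (gaussianReal 0 a.toNNReal) ℙ :=
    ⟨hG.aemeasurable, by simpa using hlaw 1 0⟩
  have hlawξ : HasLaw ξ (gaussianReal 0 b.toNNReal) ℙ :=
    ⟨hξ.aemeasurable, by simpa using hlaw 0 1⟩
  have hlawM : HasLaw (G + ξ) (gaussianReal 0 (a + b + 2 * c).toNNReal) ℙ :=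
    ⟨(hG.add hξ).aemeasurable, by
      simpa [Pi.add_def, add_right_comm a (2 * c) b] using hlaw 1 1⟩
  have hjoint := hasGaussianLaw_prodMk_of_forall_linearCombination hG.aemeasurable hξ.aemeasurable
    fun u v ↦ ⟨0, _, hlaw u v⟩
  have hvarG := variance_eq_of_hasLaw_gaussianReal ha.le hlawG
  have hvarξ := variance_eq_of_hasLaw_gaussianReal hb.le hlawξ
  have hcov : cov[G, ξ] = c := by
    linarith [variance_add hjoint.fst.memLp_two hjoint.snd.memLp_two,
      variance_eq_of_hasLaw_gaussianReal hvarM.le hlawM]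
  have hexpansion := condExpEvent_mul_add_isBigO hjoint (integral_eq_of_hasLaw_gaussianReal hlawG)
    (integral_eq_of_hasLaw_gaussianReal hlawξ) (by simpa only [hvarG, hvarξ, hcov] using hvarM.ne')
  rw [hvarG, hvarξ, hcov] at hexpansion
  exact hexpansion.trans_isLittleO (zpow_isLittleO_zpow_atTop (by norm_num))
end

section
/- Let (G, ξ) be a centered bivariate Gaussian vector with covariance matrix [[a, c], [c, b]], a, b > 0, |c| < √(ab), a + c > 0, and M = G + ξ. Then the conditional correlation between G and M given {M > m} tends to 0, with Corr(G, M | M > m) ~ ((a+c)√(a+b+2c))/(m √(ab - c²)) as m → ∞. -/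
open MeasureTheory ProbabilityTheory Filter Asymptotics Real

/-- Variance of `X` conditioned on an event `s`. -/
noncomputable def condVarEvent {Ω : Type*} [MeasureSpace Ω] (X : Ω → ℝ) (s : Set Ω) : ℝ :=
  condExpEvent (fun ω => X ω ^ 2) s - (condExpEvent X s) ^ 2

/-- Covariance of `X` and `Y` conditioned on an event `s`. -/
noncomputable def condCovEvent {Ω : Type*} [MeasureSpace Ω] (X Y : Ω → ℝ) (s : Set Ω) : ℝ :=
  condExpEvent (fun ω => X ω * Y ω) s - condExpEvent X s * condExpEvent Y s

/-!
Regress the goal on the proxy `M = G + ξ`: with `β = Cov(G, M) / Var(M)`, the residual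
`Z = G - β M` is uncorrelated with `M`, hence independent of it by joint Gaussianity, and it stays
independent of `M`, with the same law, after conditioning on `{M > m}`. So with
`V(m) = Var(M | M > m)` the conditional correlation is `β V(m) / √((β² V(m) + Var Z) V(m))`.

The substitution `x = m + t / m` turns the Gaussian density above `m` into
`exp(-t / Var M) * exp(-t² / (2 m² Var M))` up to a constant. By dominated convergence the moments
of the rescaled excess `m (M - m)` given `M > m` tend to those of the exponential law with mean
`Var M`, so `V(m) ~ (Var M / m)²`.
-/

open scoped Nat NNReal ENNReal

/-- Correlation of `X` and `Y` conditioned on an event `s`; it is `0` when one of the conditional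
variances vanishes. -/
noncomputable def condCorrEvent {Ω : Type*} [MeasureSpace Ω] (X Y : Ω → ℝ) (s : Set Ω) : ℝ :=
  condCovEvent X Y s / √(condVarEvent X s * condVarEvent Y s)

section ConditioningOnEvent

variable {Ω : Type*} [MeasureSpace Ω] {X Y : Ω → ℝ} {s : Set Ω}

lemma condExpEvent_eq_integral_cond (X : Ω → ℝ) (s : Set Ω) :
    condExpEvent X s = ∫ ω, X ω ∂ℙ[|s] := by
  rw [condExpEvent, ProbabilityTheory.cond, integral_smul_measure, ENNReal.toReal_inv,
    smul_eq_mul, div_eq_inv_mul]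

lemma condVarEvent_eq_variance_cond [IsProbabilityMeasure ℙ[|s]] (hX : MemLp X 2 ℙ[|s]) :
    condVarEvent X s = Var[X; ℙ[|s]] := by
  simp only [variance_eq_sub hX, condVarEvent, condExpEvent_eq_integral_cond, Pi.pow_apply]

lemma condCovEvent_eq_covariance_cond [IsProbabilityMeasure ℙ[|s]]
    (hX : MemLp X 2 ℙ[|s]) (hY : MemLp Y 2 ℙ[|s]) :
    condCovEvent X Y s = cov[X, Y; ℙ[|s]] := by
  simp only [covariance_eq_sub hX hY, condCovEvent, condExpEvent_eq_integral_cond, Pi.mul_apply]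

end ConditioningOnEvent

section Cond

variable {Ω E F : Type*} {mΩ : MeasurableSpace Ω} {mE : MeasurableSpace E}
  {mF : MeasurableSpace F} {μ : Measure Ω}

lemma memLp_cond {E : Type*} [NormedAddCommGroup E] {X : Ω → E} {p : ℝ≥0∞} {s : Set Ω}
    (hX : MemLp X p μ) (hs : μ s ≠ 0) : MemLp X p μ[|s] :=
  (hX.restrict s).smul_measure (ENNReal.inv_ne_top.2 hs)

lemma hasLaw_cond_preimage {X : Ω → E} {ν : Measure E} {t : Set E} (hX : HasLaw X ν μ)
    (ht : MeasurableSet t) : HasLaw X ν[|t] μ[|X ⁻¹' t] where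
  aemeasurable := hX.aemeasurable.mono_ac cond_absolutelyContinuous
  map_eq := by
    rw [ProbabilityTheory.cond, ProbabilityTheory.cond, Measure.map_smul,
      ← Measure.restrict_map_of_aemeasurable hX.aemeasurable ht,
      ← Measure.map_apply_of_aemeasurable hX.aemeasurable ht, hX.map_eq]

variable {X : Ω → E} {Y : Ω → F} {t : Set E}

lemma measure_inter_preimage_cond_preimage (hXY : IndepFun X Y μ) (hX : Measurable X)
    (ht : MeasurableSet t) {A : Set E} {B : Set F} (hA : MeasurableSet A)
    (hB : MeasurableSet B) :
    μ[|X ⁻¹' t] (X ⁻¹' A ∩ Y ⁻¹' B) = μ[|X ⁻¹' t] (X ⁻¹' A) * μ (Y ⁻¹' B) := by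
  rw [cond_apply (hX ht), cond_apply (hX ht), ← Set.inter_assoc, ← Set.preimage_inter,
    hXY.measure_inter_preimage_eq_mul _ _ (ht.inter hA) hB, mul_assoc]

variable [IsFiniteMeasure μ]

lemma measure_preimage_cond_preimage (hXY : IndepFun X Y μ) (hX : Measurable X)
    (ht : MeasurableSet t) (ht₀ : μ (X ⁻¹' t) ≠ 0) {B : Set F} (hB : MeasurableSet B) :
    μ[|X ⁻¹' t] (Y ⁻¹' B) = μ (Y ⁻¹' B) := by
  have := cond_isProbabilityMeasure ht₀
  simpa using measure_inter_preimage_cond_preimage hXY hX ht MeasurableSet.univ hB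

lemma indepFun_cond_preimage (hXY : IndepFun X Y μ) (hX : Measurable X)
    (ht : MeasurableSet t) (ht₀ : μ (X ⁻¹' t) ≠ 0) : IndepFun X Y μ[|X ⁻¹' t] := by
  refine indepFun_iff_measure_inter_preimage_eq_mul.2 fun A B hA hB ↦ ?_
  rw [measure_inter_preimage_cond_preimage hXY hX ht hA hB,
    measure_preimage_cond_preimage hXY hX ht ht₀ hB]

lemma hasLaw_cond_preimage_of_indepFun {ν : Measure F} (hXY : IndepFun X Y μ) (hX : Measurable X)
    (hY : HasLaw Y ν μ) (ht : MeasurableSet t) (ht₀ : μ (X ⁻¹' t) ≠ 0) :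
    HasLaw Y ν μ[|X ⁻¹' t] where
  aemeasurable := hY.aemeasurable.mono_ac cond_absolutelyContinuous
  map_eq := by
    ext B hB
    rw [Measure.map_apply_of_aemeasurable
        (hY.aemeasurable.mono_ac cond_absolutelyContinuous) hB,
      measure_preimage_cond_preimage hXY hX ht ht₀ hB, ← hY.map_eq,
      Measure.map_apply_of_aemeasurable hY.aemeasurable hB]

end Cond

section Regression

variable {Ω : Type*} {mΩ : MeasurableSpace Ω} {μ : Measure Ω} [IsFiniteMeasure μ]
  {Y Z : Ω → ℝ} {t : Set ℝ}

lemma covariance_cond_add_indepFun (hYZ : IndepFun Y Z μ) (hY : Measurable Y)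
    (hY₂ : MemLp Y 2 μ) (hZ₂ : MemLp Z 2 μ) (ht : MeasurableSet t) (ht₀ : μ (Y ⁻¹' t) ≠ 0)
    (β : ℝ) :
    cov[fun ω ↦ β * Y ω + Z ω, Y; μ[|Y ⁻¹' t]] = β * Var[Y; μ[|Y ⁻¹' t]] := by
  have := cond_isProbabilityMeasure ht₀
  have hY₂' := memLp_cond hY₂ ht₀
  have hZ₂' := memLp_cond hZ₂ ht₀
  have hYZ' := indepFun_cond_preimage hYZ hY ht ht₀
  calc cov[(fun ω ↦ β * Y ω) + Z, Y; μ[|Y ⁻¹' t]]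
      = β * cov[Y, Y; μ[|Y ⁻¹' t]] + cov[Z, Y; μ[|Y ⁻¹' t]] := by
        rw [covariance_add_left (hY₂'.const_mul β) hZ₂' hY₂', covariance_const_mul_left]
    _ = β * Var[Y; μ[|Y ⁻¹' t]] := by
        rw [covariance_self hY.aemeasurable, hYZ'.symm.covariance_eq_zero hZ₂' hY₂', add_zero]

lemma variance_cond_add_indepFun (hYZ : IndepFun Y Z μ) (hY : Measurable Y)
    (hY₂ : MemLp Y 2 μ) (hZ₂ : MemLp Z 2 μ) (ht : MeasurableSet t) (ht₀ : μ (Y ⁻¹' t) ≠ 0)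
    (β : ℝ) :
    Var[fun ω ↦ β * Y ω + Z ω; μ[|Y ⁻¹' t]] = β ^ 2 * Var[Y; μ[|Y ⁻¹' t]] + Var[Z; μ] := by
  have := cond_isProbabilityMeasure ht₀
  have hYZ' : IndepFun (fun ω ↦ β * Y ω) Z μ[|Y ⁻¹' t] :=
    (indepFun_cond_preimage hYZ hY ht ht₀).comp (measurable_const_mul β) measurable_id
  have hZ_law : HasLaw Z (μ.map Z) μ := ⟨hZ₂.aestronglyMeasurable.aemeasurable, rfl⟩
  rw [hYZ'.variance_fun_add ((memLp_cond hY₂ ht₀).const_mul β) (memLp_cond hZ₂ ht₀),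
    variance_const_mul, (hasLaw_cond_preimage_of_indepFun hYZ hY hZ_law ht ht₀).variance_eq,
    hZ_law.variance_eq]

lemma condCorrEvent_add_indepFun {Ω : Type*} [MeasureSpace Ω] [IsFiniteMeasure (ℙ : Measure Ω)]
    {Y Z : Ω → ℝ} (hYZ : IndepFun Y Z) (hY : Measurable Y) (hY₂ : MemLp Y 2) (hZ₂ : MemLp Z 2)
    (ht : MeasurableSet t) (ht₀ : ℙ (Y ⁻¹' t) ≠ 0) (β : ℝ) :
    condCorrEvent (fun ω ↦ β * Y ω + Z ω) Y (Y ⁻¹' t) =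
      β * Var[Y; ℙ[|Y ⁻¹' t]] /
        √((β ^ 2 * Var[Y; ℙ[|Y ⁻¹' t]] + Var[Z]) * Var[Y; ℙ[|Y ⁻¹' t]]) := by
  have := cond_isProbabilityMeasure ht₀
  have hY₂' := memLp_cond hY₂ ht₀
  have hX₂' : MemLp (fun ω ↦ β * Y ω + Z ω) 2 ℙ[|Y ⁻¹' t] :=
    (hY₂'.const_mul β).add (memLp_cond hZ₂ ht₀)
  rw [condCorrEvent, condCovEvent_eq_covariance_cond hX₂' hY₂',
    condVarEvent_eq_variance_cond hX₂', condVarEvent_eq_variance_cond hY₂',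
    covariance_cond_add_indepFun hYZ hY hY₂ hZ₂ ht ht₀,
    variance_cond_add_indepFun hYZ hY hY₂ hZ₂ ht ht₀]

end Regression

section GaussianTail

lemma integrableOn_Ioi_pow_mul_exp_neg_div {v : ℝ} (hv : 0 < v) (k : ℕ) :
    IntegrableOn (fun t : ℝ ↦ t ^ k * exp (-(t / v))) (Set.Ioi 0) := by
  have hk : (-1 : ℝ) < k := by linarith [k.cast_nonneg (α := ℝ)]
  refine (integrableOn_rpow_mul_exp_neg_mul_rpow hk one_pos (inv_pos.2 hv)).congr_fun
    (fun t _ ↦ ?_) measurableSet_Ioi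
  simp only [rpow_natCast, rpow_one, neg_mul, div_eq_inv_mul]

lemma integral_Ioi_pow_mul_exp_neg_div {v : ℝ} (hv : 0 < v) (k : ℕ) :
    ∫ t in Set.Ioi (0 : ℝ), t ^ k * exp (-(t / v)) = k ! * v ^ (k + 1) := by
  have h := integral_rpow_mul_exp_neg_mul_Ioi (a := k + 1) (by positivity) (inv_pos.2 hv)
  simp only [add_sub_cancel_right, rpow_natCast, one_div, inv_inv, Gamma_nat_eq_factorial] at h
  simp only [div_eq_inv_mul, h, mul_comm (k ! : ℝ)]
  norm_cast

/-- The unnormalised `k`-th moment of the rescaled excess `m * (M - m)` of a centred Gaussian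
variable `M` of variance `v` above the level `m`: the integral of `(m * (x - m)) ^ k` against the
Gaussian density on `(m, ∞)` is this quantity up to a factor independent of `k`. -/
noncomputable def rescaledTailMoment (v : ℝ) (k : ℕ) (m : ℝ) : ℝ :=
  ∫ t in Set.Ioi (0 : ℝ), t ^ k * (exp (-(t / v)) * exp (-((t / m) ^ 2 / (2 * v))))

lemma tendsto_rescaledTailMoment {v : ℝ} (hv : 0 < v) (k : ℕ) :
    Tendsto (rescaledTailMoment v k) atTop (nhds (k ! * v ^ (k + 1))) := by
  rw [← integral_Ioi_pow_mul_exp_neg_div hv k]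
  refine tendsto_integral_filter_of_dominated_convergence _
    (.of_forall fun m ↦ (by fun_prop : Measurable _).aestronglyMeasurable)
    (.of_forall fun m ↦ ?_) (integrableOn_Ioi_pow_mul_exp_neg_div hv k) (.of_forall fun t ↦ ?_)
  · filter_upwards [ae_restrict_mem measurableSet_Ioi] with t (ht : 0 < t)
    have h_le_one : exp (-((t / m) ^ 2 / (2 * v))) ≤ 1 :=
      exp_le_one_iff.2 (neg_nonpos.2 (by positivity))
    rw [norm_of_nonneg (by positivity)]
    gcongr
    exact mul_le_of_le_one_right (exp_pos _).le h_le_one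
  · have h_div : Tendsto (fun m : ℝ ↦ t / m) atTop (nhds 0) :=
      tendsto_const_nhds.div_atTop tendsto_id
    have h_exp : Tendsto (fun m : ℝ ↦ exp (-((t / m) ^ 2 / (2 * v)))) atTop (nhds 1) := by
      simpa using (((h_div.pow 2).div_const (2 * v)).neg).rexp
    simpa using (h_exp.const_mul (exp (-(t / v)))).const_mul (t ^ k)

variable {v : ℝ≥0}

lemma gaussianPDFReal_add_div (v : ℝ≥0) {m : ℝ} (hm : m ≠ 0) (t : ℝ) :
    gaussianPDFReal 0 v (m + t / m) =
      gaussianPDFReal 0 v m * (exp (-(t / v)) * exp (-((t / m) ^ 2 / (2 * v)))) := by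
  simp only [gaussianPDFReal, mul_assoc, ← exp_add]
  congr 3
  field_simp
  ring

lemma setIntegral_gaussianReal_eq_setIntegral_smul {E : Type*} [NormedAddCommGroup E]
    [NormedSpace ℝ E] {μ : ℝ} (hv : v ≠ 0) {s : Set ℝ} (hs : MeasurableSet s) (f : ℝ → E) :
    ∫ x in s, f x ∂gaussianReal μ v = ∫ x in s, gaussianPDFReal μ v x • f x := by
  simp_rw [← integral_indicator hs, integral_gaussianReal_eq_integral_smul hv,
    Set.indicator_smul_apply]

lemma setIntegral_Ioi_eq_inv_smul_setIntegral_Ioi_add_div {E : Type*} [NormedAddCommGroup E]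
    [NormedSpace ℝ E] {m : ℝ} (hm : 0 < m) (f : ℝ → E) :
    ∫ x in Set.Ioi m, f x = m⁻¹ • ∫ t in Set.Ioi 0, f (m + t / m) := by
  have h_scale := integral_comp_mul_right_Ioi (fun x ↦ f (m + x)) 0 (inv_pos.2 hm)
  have h_shift := (measurePreserving_add_left volume m).setIntegral_preimage_emb
    (measurableEmbedding_addLeft m) f (Set.Ioi m)
  rw [zero_mul, inv_inv] at h_scale
  rw [Set.preimage_const_add_Ioi, sub_self] at h_shift
  simp only [div_eq_mul_inv, h_scale, h_shift, inv_smul_smul₀ hm.ne']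

lemma setIntegral_Ioi_gaussianReal_mul_sub_pow (hv : v ≠ 0) {m : ℝ} (hm : 0 < m) (k : ℕ) :
    ∫ x in Set.Ioi m, (m * (x - m)) ^ k ∂gaussianReal 0 v =
      m⁻¹ * gaussianPDFReal 0 v m * rescaledTailMoment v k m := by
  rw [setIntegral_gaussianReal_eq_setIntegral_smul hv measurableSet_Ioi,
    setIntegral_Ioi_eq_inv_smul_setIntegral_Ioi_add_div hm, smul_eq_mul, mul_assoc,
    rescaledTailMoment, ← integral_const_mul (gaussianPDFReal 0 v m)]
  congr 1
  refine integral_congr_ae (.of_forall fun t ↦ ?_)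
  beta_reduce
  rw [gaussianPDFReal_add_div v hm.ne', add_sub_cancel_left, mul_div_cancel₀ t hm.ne', smul_eq_mul]
  ring

lemma integral_cond_Ioi_gaussianReal_mul_sub_pow (hv : v ≠ 0) {m : ℝ} (hm : 0 < m) (k : ℕ) :
    ∫ x, (m * (x - m)) ^ k ∂(gaussianReal 0 v)[|Set.Ioi m] =
      rescaledTailMoment v k m / rescaledTailMoment v 0 m := by
  have h_real : (gaussianReal 0 v).real (Set.Ioi m) =
      m⁻¹ * gaussianPDFReal 0 v m * rescaledTailMoment v 0 m := by
    simpa using setIntegral_Ioi_gaussianReal_mul_sub_pow hv hm 0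
  have h_pdf := gaussianPDFReal_pos 0 v m hv
  rw [ProbabilityTheory.cond, integral_smul_measure, ENNReal.toReal_inv, ← Measure.real, h_real,
    setIntegral_Ioi_gaussianReal_mul_sub_pow hv hm k, smul_eq_mul, inv_mul_eq_div,
    mul_div_mul_left _ _ (by positivity)]

lemma tendsto_integral_cond_Ioi_gaussianReal_mul_sub_pow (hv : v ≠ 0) (k : ℕ) :
    Tendsto (fun m : ℝ ↦ ∫ x, (m * (x - m)) ^ k ∂(gaussianReal 0 v)[|Set.Ioi m]) atTop
      (nhds (k ! * v ^ k)) := by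
  have hv' : (0 : ℝ) < v := by positivity
  have h_ratio :=
    (tendsto_rescaledTailMoment hv' k).div (tendsto_rescaledTailMoment hv' 0) (by positivity)
  have h_lim : (k ! * v ^ (k + 1) : ℝ) / (0 ! * v ^ (0 + 1)) = k ! * v ^ k := by
    field_simp
    simp [pow_succ']
  rw [h_lim] at h_ratio
  refine h_ratio.congr' ?_
  filter_upwards [eventually_gt_atTop 0] with m hm
  exact (integral_cond_Ioi_gaussianReal_mul_sub_pow hv hm k).symm

lemma gaussianReal_Ioi_ne_zero (μ : ℝ) (hv : v ≠ 0) (m : ℝ) :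
    gaussianReal μ v (Set.Ioi m) ≠ 0 := by
  intro h
  simpa using gaussianReal_absolutelyContinuous' μ hv h

lemma tendsto_sq_mul_variance_cond_Ioi_gaussianReal (hv : v ≠ 0) :
    Tendsto (fun m : ℝ ↦ m ^ 2 * Var[id; (gaussianReal 0 v)[|Set.Ioi m]]) atTop
      (nhds (v ^ 2)) := by
  have h_moments := (tendsto_integral_cond_Ioi_gaussianReal_mul_sub_pow hv 2).sub
    ((tendsto_integral_cond_Ioi_gaussianReal_mul_sub_pow hv 1).pow 2)
  have h_lim : (2 ! * v ^ 2 - (1 ! * v ^ 1) ^ 2 : ℝ) = v ^ 2 := by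
    rw [Nat.factorial_two, Nat.factorial_one]
    push_cast
    ring
  rw [h_lim] at h_moments
  refine h_moments.congr fun m ↦ ?_
  have h_pos := gaussianReal_Ioi_ne_zero 0 hv m
  have := cond_isProbabilityMeasure h_pos
  have h_memLp : MemLp id 2 (gaussianReal 0 v)[|Set.Ioi m] :=
    memLp_cond (memLp_id_gaussianReal 2) h_pos
  have h_excess : MemLp (fun x : ℝ ↦ m * (x - m)) 2 (gaussianReal 0 v)[|Set.Ioi m] :=
    (h_memLp.sub (memLp_const m)).const_mul m
  rw [← variance_sub_const h_memLp.aestronglyMeasurable m, ← variance_const_mul]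
  simp only [id, variance_eq_sub h_excess, Pi.pow_apply, pow_one]

lemma isEquivalent_variance_cond_Ioi_gaussianReal (hv : v ≠ 0) :
    (fun m : ℝ ↦ Var[id; (gaussianReal 0 v)[|Set.Ioi m]]) ~[atTop] fun m ↦ (v / m) ^ 2 := by
  have h_const : (fun m : ℝ ↦ m ^ 2 * Var[id; (gaussianReal 0 v)[|Set.Ioi m]]) ~[atTop]
      Function.const ℝ ((v : ℝ) ^ 2) :=
    (isEquivalent_const_iff_tendsto (by positivity)).2
      (tendsto_sq_mul_variance_cond_Ioi_gaussianReal hv)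
  refine ((h_const.div (IsEquivalent.refl (u := fun m : ℝ ↦ m ^ 2))).congr_left ?_).congr_right
    (.of_forall fun m ↦ (div_pow _ _ _).symm)
  filter_upwards [eventually_ne_atTop 0] with m hm
  exact mul_div_cancel_left₀ _ (pow_ne_zero 2 hm)

lemma measure_preimage_Ioi_ne_zero {Ω : Type*} {mΩ : MeasurableSpace Ω} {μ : Measure Ω}
    {Y : Ω → ℝ} {y : ℝ} (hY : HasLaw Y (gaussianReal y v) μ) (hv : v ≠ 0) (m : ℝ) :
    μ (Y ⁻¹' Set.Ioi m) ≠ 0 := by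
  rw [← Measure.map_apply_of_aemeasurable hY.aemeasurable measurableSet_Ioi, hY.map_eq]
  exact gaussianReal_Ioi_ne_zero y hv m

lemma isEquivalent_variance_cond_preimage_Ioi {Ω : Type*} {mΩ : MeasurableSpace Ω}
    {μ : Measure Ω} {Y : Ω → ℝ} (hY : HasLaw Y (gaussianReal 0 v) μ) (hv : v ≠ 0) :
    (fun m ↦ Var[Y; μ[|Y ⁻¹' Set.Ioi m]]) ~[atTop] fun m ↦ (v / m) ^ 2 := by
  simpa only [(hasLaw_cond_preimage hY measurableSet_Ioi).variance_eq] using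
    isEquivalent_variance_cond_Ioi_gaussianReal hv

end GaussianTail

section Asymptotics

variable {α : Type*} {l : Filter α} {V w : α → ℝ}

lemma isEquivalent_sqrt_of_isEquivalent_sq (hV : V ~[l] fun x ↦ w x ^ 2)
    (hw : ∀ᶠ x in l, 0 < w x) : (fun x ↦ √(V x)) ~[l] w := by
  have h_ratio : Tendsto (fun x ↦ V x / w x ^ 2) l (nhds 1) :=
    (isEquivalent_iff_tendsto_one (hw.mono fun x hx ↦ (pow_pos hx 2).ne')).1 hV
  refine (isEquivalent_iff_tendsto_one (hw.mono fun x hx ↦ hx.ne')).2 ?_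
  refine (sqrt_one ▸ h_ratio.sqrt).congr' ?_
  filter_upwards [hw] with x hx
  rw [sqrt_div' _ (sq_nonneg _), sqrt_sq hx.le, Pi.div_apply]

lemma isEquivalent_mul_div_sqrt_mul {τ : ℝ} (β : ℝ) (hV : V ~[l] fun x ↦ w x ^ 2)
    (hw : ∀ᶠ x in l, 0 < w x) (hw₀ : Tendsto w l (nhds 0)) (hτ : 0 < τ) :
    (fun x ↦ β * V x / √((β ^ 2 * V x + τ) * V x)) ~[l] fun x ↦ β * w x / √τ := by
  have hV₀ : Tendsto V l (nhds 0) :=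
    hV.symm.tendsto_nhds (by simpa using hw₀.pow 2)
  have h_denom : (fun x ↦ √(β ^ 2 * V x + τ)) ~[l] fun _ ↦ √τ := by
    refine (isEquivalent_const_iff_tendsto (sqrt_pos.2 hτ).ne').2 ?_
    simpa using ((hV₀.const_mul (β ^ 2)).add_const τ).sqrt
  have h_num : (fun x ↦ β * √(V x)) ~[l] fun x ↦ β * w x :=
    IsEquivalent.refl.mul (isEquivalent_sqrt_of_isEquivalent_sq hV hw)
  refine (h_num.div h_denom).congr_left ?_
  filter_upwards [hV.eventually_pos (hw.mono fun x hx ↦ pow_pos hx 2)] with x hx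
  calc β * √(V x) / √(β ^ 2 * V x + τ)
      = β * (V x / √(V x)) / √(β ^ 2 * V x + τ) := by rw [div_sqrt]
    _ = β * V x / √((β ^ 2 * V x + τ) * V x) := by
        rw [sqrt_mul (by positivity), ← mul_div_assoc, div_div, mul_comm √(V x)]

end Asymptotics

/-- `(X, Y)` is a centred Gaussian vector with covariance matrix `[[a, c], [c, b]]` under `μ`,
expressed through the laws of its linear combinations. As `Real.toNNReal` truncates at `0`, the
parameters are the actual covariances only when the matrix is positive semidefinite. -/
def IsCenteredGaussianPair {Ω : Type*} [MeasurableSpace Ω] (X Y : Ω → ℝ) (a c b : ℝ)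
    (μ : Measure Ω) : Prop :=
  ∀ u v : ℝ, HasLaw (fun ω ↦ u * X ω + v * Y ω)
    (gaussianReal 0 (u ^ 2 * a + 2 * u * v * c + v ^ 2 * b).toNNReal) μ

namespace IsCenteredGaussianPair

variable {Ω : Type*} {mΩ : MeasurableSpace Ω} {μ : Measure Ω} {X Y : Ω → ℝ} {a b c : ℝ}

lemma linearComb (h : IsCenteredGaussianPair X Y a c b μ) (p q r s : ℝ) :
    IsCenteredGaussianPair (fun ω ↦ p * X ω + q * Y ω) (fun ω ↦ r * X ω + s * Y ω)
      (p ^ 2 * a + 2 * p * q * c + q ^ 2 * b)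
      (p * r * a + (p * s + q * r) * c + q * s * b)
      (r ^ 2 * a + 2 * r * s * c + s ^ 2 * b) μ := by
  intro u v
  convert h (u * p + v * r) (u * q + v * s) using 2
  · ring
  · ring_nf

lemma hasLaw_fst (h : IsCenteredGaussianPair X Y a c b μ) :
    HasLaw X (gaussianReal 0 a.toNNReal) μ := by
  simpa using h 1 0

lemma hasLaw_snd (h : IsCenteredGaussianPair X Y a c b μ) :
    HasLaw Y (gaussianReal 0 b.toNNReal) μ := by
  simpa using h 0 1

lemma memLp_fst (h : IsCenteredGaussianPair X Y a c b μ) : MemLp X 2 μ :=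
  h.hasLaw_fst.hasGaussianLaw.memLp_two

lemma memLp_snd (h : IsCenteredGaussianPair X Y a c b μ) : MemLp Y 2 μ :=
  h.hasLaw_snd.hasGaussianLaw.memLp_two

lemma hasGaussianLaw (h : IsCenteredGaussianPair X Y a c b μ) :
    HasGaussianLaw (fun ω ↦ (X ω, Y ω)) μ where
  isGaussian_map := by
    have hXY : AEMeasurable (fun ω ↦ (X ω, Y ω)) μ :=
      h.hasLaw_fst.aemeasurable.prodMk h.hasLaw_snd.aemeasurable
    refine isGaussian_of_map_eq_gaussianReal fun L ↦ ?_
    have hL : L ∘ (fun ω ↦ (X ω, Y ω)) = fun ω ↦ L (1, 0) * X ω + L (0, 1) * Y ω := by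
      ext ω
      calc L (X ω, Y ω) = L (X ω • (1, 0) + Y ω • (0, 1)) := by simp
        _ = L (1, 0) * X ω + L (0, 1) * Y ω := by
          simp only [map_add, map_smul, smul_eq_mul, mul_comm]
    rw [AEMeasurable.map_map_of_aemeasurable (by fun_prop) hXY, hL]
    exact ⟨0, _, (h _ _).map_eq⟩

lemma covariance_eq_zero (h : IsCenteredGaussianPair X Y a 0 b μ) : cov[X, Y; μ] = 0 := by
  have := h.hasLaw_fst.isProbabilityMeasure
  have h_add : Var[fun ω ↦ X ω + Y ω; μ] = (a + b).toNNReal := by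
    simpa using (h 1 1).variance_eq
  have h_sub : Var[fun ω ↦ X ω - Y ω; μ] = (a + b).toNNReal := by
    simpa [← sub_eq_add_neg] using (h 1 (-1)).variance_eq
  -- `Var (X + Y) = Var (X - Y)`, and the difference of the two is `4 * cov[X, Y]`.
  rw [variance_fun_add h.memLp_fst h.memLp_snd] at h_add
  rw [variance_fun_sub h.memLp_fst h.memLp_snd] at h_sub
  linarith

lemma indepFun (h : IsCenteredGaussianPair X Y a 0 b μ) : IndepFun X Y μ :=
  h.hasGaussianLaw.indepFun_of_covariance_eq_zero h.covariance_eq_zero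

lemma residual (h : IsCenteredGaussianPair X Y a c b μ) (hb : b ≠ 0) :
    IsCenteredGaussianPair Y (fun ω ↦ X ω - c / b * Y ω) b 0 (a - c ^ 2 / b) μ := by
  convert h.linearComb 0 1 1 (-(c / b)) using 1
  · simp
  · simp [sub_eq_add_neg]
  · ring
  · field_simp
    ring
  · field_simp
    ring

lemma isEquivalent_condCorrEvent_Ioi {Ω : Type*} [MeasureSpace Ω] {X Y : Ω → ℝ}
    (h : IsCenteredGaussianPair X Y a c b ℙ) (hY : Measurable Y) (hb : 0 < b)
    (hdet : 0 < a * b - c ^ 2) :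
    (fun m ↦ condCorrEvent X Y (Y ⁻¹' Set.Ioi m)) ~[atTop]
      fun m ↦ c * √b / (m * √(a * b - c ^ 2)) := by
  have := h.hasLaw_fst.isProbabilityMeasure
  have hb' : b.toNNReal ≠ 0 := (toNNReal_pos.2 hb).ne'
  have h_schur : a - c ^ 2 / b = (a * b - c ^ 2) / b := by field_simp
  have h_schur_pos : 0 < a - c ^ 2 / b := h_schur ▸ div_pos hdet hb
  have h_res := h.residual hb.ne'
  have h_var_res : Var[fun ω ↦ X ω - c / b * Y ω] = a - c ^ 2 / b := by
    simpa [h_schur_pos.le] using h_res.hasLaw_snd.variance_eq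
  have h_var := isEquivalent_variance_cond_preimage_Ioi h.hasLaw_snd hb'
  rw [coe_toNNReal b hb.le] at h_var
  have h_scale : ∀ᶠ m : ℝ in atTop, 0 < b / m :=
    (eventually_gt_atTop 0).mono fun m hm ↦ div_pos hb hm
  refine ((isEquivalent_mul_div_sqrt_mul (c / b) h_var h_scale
    (tendsto_const_nhds.div_atTop tendsto_id) h_schur_pos).congr_left
      (.of_forall fun m ↦ ?_)).congr_right (.of_forall fun m ↦ ?_)
  · have h_corr := condCorrEvent_add_indepFun h_res.indepFun hY h_res.memLp_fst h_res.memLp_snd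
      measurableSet_Ioi (measure_preimage_Ioi_ne_zero h.hasLaw_snd hb' m) (c / b)
    simpa only [h_var_res, add_sub_cancel] using h_corr.symm
  · have h_sqrt : √(a - c ^ 2 / b) = √(a * b - c ^ 2) / √b := by
      rw [h_schur, sqrt_div hdet.le]
    beta_reduce
    rw [h_sqrt, div_mul_div_cancel₀ hb.ne', div_div_eq_mul_div, div_mul_eq_mul_div, div_div]

lemma tendsto_condCorrEvent_Ioi {Ω : Type*} [MeasureSpace Ω] {X Y : Ω → ℝ}
    (h : IsCenteredGaussianPair X Y a c b ℙ) (hY : Measurable Y) (hb : 0 < b)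
    (hdet : 0 < a * b - c ^ 2) :
    Tendsto (fun m ↦ condCorrEvent X Y (Y ⁻¹' Set.Ioi m)) atTop (nhds 0) :=
  (h.isEquivalent_condCorrEvent_Ioi hY hb hdet).symm.tendsto_nhds <|
    tendsto_const_nhds.div_atTop (tendsto_id.atTop_mul_const (sqrt_pos.2 hdet))

end IsCenteredGaussianPair

theorem gaussian_condCorr_goal_proxy_general {Ω : Type*} [MeasureSpace Ω]
    (G ξ : Ω → ℝ) (hG : Measurable G) (hξ : Measurable ξ)
    (a b c : ℝ) (ha : 0 < a) (hc : |c| < √(a * b))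
    (hlaw : ∀ u v : ℝ, Measure.map (fun ω ↦ u * G ω + v * ξ ω) ℙ =
      gaussianReal 0 (Real.toNNReal (u ^ 2 * a + 2 * u * v * c + v ^ 2 * b))) :
    Tendsto (fun m : ℝ ↦
        condCovEvent G (fun ω ↦ G ω + ξ ω) {ω | m < G ω + ξ ω} /
          √(condVarEvent G {ω | m < G ω + ξ ω} *
            condVarEvent (fun ω ↦ G ω + ξ ω) {ω | m < G ω + ξ ω}))
      atTop (nhds 0) ∧
    (fun m : ℝ ↦
        condCovEvent G (fun ω ↦ G ω + ξ ω) {ω | m < G ω + ξ ω} /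
          √(condVarEvent G {ω | m < G ω + ξ ω} *
            condVarEvent (fun ω ↦ G ω + ξ ω) {ω | m < G ω + ξ ω}))
      ~[atTop] (fun m : ℝ ↦
        (a + c) * √(a + b + 2 * c) / (m * √(a * b - c ^ 2))) := by
  have h_sq : c ^ 2 < a * b := sq_abs c ▸ (lt_sqrt (abs_nonneg c)).1 hc
  have h_var : 0 < a + b + 2 * c :=
    pos_of_mul_pos_right (by nlinarith [sq_nonneg (a + c)] : 0 < a * (a + b + 2 * c)) ha.le
  have h_pair : IsCenteredGaussianPair G ξ a c b ℙ := fun u v ↦ ⟨by fun_prop, hlaw u v⟩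
  have h_goal_proxy :
      IsCenteredGaussianPair G (fun ω ↦ G ω + ξ ω) a (a + c) (a + b + 2 * c) ℙ := by
    convert h_pair.linearComb 1 0 1 1 using 1
    · simp
    · simp
    all_goals ring
  have h_det : a * (a + b + 2 * c) - (a + c) ^ 2 = a * b - c ^ 2 := by ring
  have h_det_pos : 0 < a * (a + b + 2 * c) - (a + c) ^ 2 := by linarith
  rw [← h_det]
  exact ⟨h_goal_proxy.tendsto_condCorrEvent_Ioi (hG.add hξ) h_var h_det_pos,
    h_goal_proxy.isEquivalent_condCorrEvent_Ioi (hG.add hξ) h_var h_det_pos⟩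

/-- Benign Goodhart: the conditional correlation between goal and proxy vanishes,
`Corr(G, M | M > m) ~ ((a+c)√(a+b+2c))/(m √(ab - c²))` as `m → ∞`. -/
theorem gaussian_condCorr_goal_proxy {Ω : Type*} [MeasureSpace Ω] [IsProbabilityMeasure (ℙ : Measure Ω)]
    (G ξ : Ω → ℝ) (hG : Measurable G) (hξ : Measurable ξ)
    (a b c : ℝ) (ha : 0 < a) (hb : 0 < b) (hc : |c| < Real.sqrt (a * b))
    (hlaw : ∀ u v : ℝ, Measure.map (fun ω => u * G ω + v * ξ ω) ℙ =
      gaussianReal 0 (Real.toNNReal (u ^ 2 * a + 2 * u * v * c + v ^ 2 * b))) (hac : 0 < a + c) :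
    Tendsto (fun m : ℝ =>
        condCovEvent G (fun ω => G ω + ξ ω) {ω | m < G ω + ξ ω} /
          Real.sqrt (condVarEvent G {ω | m < G ω + ξ ω} *
            condVarEvent (fun ω => G ω + ξ ω) {ω | m < G ω + ξ ω}))
      atTop (nhds 0) ∧
    (fun m : ℝ =>
        condCovEvent G (fun ω => G ω + ξ ω) {ω | m < G ω + ξ ω} /
          Real.sqrt (condVarEvent G {ω | m < G ω + ξ ω} *
            condVarEvent (fun ω => G ω + ξ ω) {ω | m < G ω + ξ ω}))
      ~[atTop] (fun m : ℝ =>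
        (a + c) * Real.sqrt (a + b + 2 * c) / (m * Real.sqrt (a * b - c ^ 2))) := by
  exact gaussian_condCorr_goal_proxy_general G ξ hG hξ a b c ha hc hlaw
end
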